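/- Let d, n ∈ ℕ and p : Fin n → EuclideanSpace ℝ (Fin d) with affineSpan ℝ (Set.range p) = ⊤. Then the subspace of Fin n → EuclideanSpace ℝ (Fin d) consisting of all rigid velocity fields, i.e. all q for which there exist a skew-adjoint linear map A : EuclideanSpace ℝ (Fin d) →ₗ[ℝ] EuclideanSpace ℝ (Fin d) and a vector b with q i = A (p i) + b for all i, has dimension (finrank over ℝ) equal to d(d+1)/2. (There are exactly d(d+1)/2 independent infinitesimal rigid motions in d dimensions when the configuration affinely spans the whole space.) -/

import Mathlib

/-!
A skew-adjoint map is given in the standard basis by a skew-symmetric matrix, hence by its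
strictly lower triangular entries, which can be prescribed freely. So a pair (strictly lower
triangular entries, translation vector) parametrizes the rigid velocity fields linearly
(`range_rigidParam`). An affine map vanishing on a set that affinely spans the space is zero, and
evaluating `x ↦ A x + b` at `x = 0` gives `b = 0` and then `A = 0`; thus the parametrization is
injective (`ker_rigidParam`). The parameter space has dimension
`(0 + 1 + ⋯ + (d - 1)) + d = d (d + 1) / 2`.
-/


open scoped RealInnerProductSpace

/-- The rigid velocity fields of a configuration `p`: velocity fields of the
form `q i = A (p i) + b` with `A` skew-adjoint and `b` a fixed vector. They
form a linear subspace of `Fin n → EuclideanSpace ℝ (Fin d)`. -/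
def rigidVelocities (d n : ℕ) (p : Fin n → EuclideanSpace ℝ (Fin d)) :
    Submodule ℝ (Fin n → EuclideanSpace ℝ (Fin d)) where
  carrier := {q | ∃ A : EuclideanSpace ℝ (Fin d) →ₗ[ℝ] EuclideanSpace ℝ (Fin d),
    (∀ x y : EuclideanSpace ℝ (Fin d), ⟪A x, y⟫ = -⟪x, A y⟫) ∧
    ∃ b : EuclideanSpace ℝ (Fin d), ∀ i, q i = A (p i) + b}
  add_mem' := by
    rintro q₁ q₂ ⟨A₁, hA₁, b₁, h₁⟩ ⟨A₂, hA₂, b₂, h₂⟩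
    refine ⟨A₁ + A₂, fun x y => ?_, b₁ + b₂, fun i => ?_⟩
    · simp only [LinearMap.add_apply, inner_add_left, inner_add_right, hA₁, hA₂]
      ring
    · simp only [Pi.add_apply, h₁ i, h₂ i, LinearMap.add_apply]
      abel
  zero_mem' := ⟨0, by simp, 0, by simp⟩
  smul_mem' := by
    rintro t q ⟨A, hA, b, h⟩
    refine ⟨t • A, fun x y => ?_, t • b, fun i => ?_⟩
    · simp [inner_smul_left, inner_smul_right, hA]
    · simp only [Pi.smul_apply, h i, LinearMap.smul_apply, smul_add]

/-- The skew-symmetric matrix with prescribed strictly lower triangular entries: `c ⟨i, j⟩`, with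
`j < i`, is the entry in row `i` and column `j`. -/
def skewOf (d : ℕ) : ((Σ i : Fin d, Fin i) → ℝ) →ₗ[ℝ] Matrix (Fin d) (Fin d) ℝ where
  toFun c := Matrix.of fun i j =>
    if h : (j : ℕ) < i then c ⟨i, j, h⟩ else if h : (i : ℕ) < j then -c ⟨j, i, h⟩ else 0
  map_add' c c' := by
    ext i j
    simp only [Matrix.of_apply, Matrix.add_apply, Pi.add_apply]
    split_ifs <;> ring
  map_smul' t c := by
    ext i j
    simp only [Matrix.of_apply, Matrix.smul_apply, Pi.smul_apply, smul_eq_mul, RingHom.id_apply]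
    split_ifs <;> ring

lemma skewOf_skew (d : ℕ) (c : (Σ i : Fin d, Fin i) → ℝ) (i j : Fin d) :
    skewOf d c i j = -skewOf d c j i := by
  simp only [skewOf, LinearMap.coe_mk, AddHom.coe_mk, Matrix.of_apply]
  split_ifs <;> first | omega | simp

lemma skewOf_injective (d : ℕ) : Function.Injective (skewOf d) := by
  intro c c' h
  ext ⟨i, j, hj⟩
  have := congrFun (congrFun h i) ⟨j, hj.trans i.2⟩
  simp only [skewOf, LinearMap.coe_mk, AddHom.coe_mk, Matrix.of_apply] at this
  rwa [dif_pos hj, dif_pos hj] at this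

lemma exists_skewOf_eq (d : ℕ) (M : Matrix (Fin d) (Fin d) ℝ) (hM : ∀ i j, M i j = -M j i) :
    ∃ c, skewOf d c = M := by
  refine ⟨fun x => M x.1 ⟨x.2, x.2.2.trans x.1.2⟩, ?_⟩
  ext i j
  simp only [skewOf, LinearMap.coe_mk, AddHom.coe_mk, Matrix.of_apply]
  split_ifs with h h'
  · rfl
  · exact (hM i j).symm
  · obtain rfl : i = j := by omega
    linarith [hM i i]

lemma inner_toEuclideanLin_of_skew (d : ℕ) (M : Matrix (Fin d) (Fin d) ℝ)
    (hM : ∀ i j, M i j = -M j i) (x y : EuclideanSpace ℝ (Fin d)) :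
    ⟪Matrix.toEuclideanLin M x, y⟫ = -⟪x, Matrix.toEuclideanLin M y⟫ := by
  have hT : M.conjTranspose = -M := by
    ext i j
    simpa using hM j i
  rw [← LinearMap.adjoint_inner_right, ← Matrix.toEuclideanLin_conjTranspose_eq_adjoint, hT]
  simp

lemma exists_skewOf_toEuclideanLin (d : ℕ)
    (A : EuclideanSpace ℝ (Fin d) →ₗ[ℝ] EuclideanSpace ℝ (Fin d))
    (hA : ∀ x y : EuclideanSpace ℝ (Fin d), ⟪A x, y⟫ = -⟪x, A y⟫) :
    ∃ c, Matrix.toEuclideanLin (skewOf d c) = A := by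
  obtain ⟨M, rfl⟩ := (Matrix.toEuclideanLin (𝕜 := ℝ) (m := Fin d) (n := Fin d)).surjective A
  obtain ⟨c, rfl⟩ := exists_skewOf_eq d M fun i j => by
    have := hA (EuclideanSpace.single j 1) (EuclideanSpace.single i 1)
    simpa [EuclideanSpace.inner_single_left, EuclideanSpace.inner_single_right] using this
  exact ⟨c, rfl⟩

/-- The velocity field at the points `p i` determined by the strictly lower triangular entries of
a skew-symmetric matrix and a translation vector. -/
noncomputable def rigidParam (d n : ℕ) (p : Fin n → EuclideanSpace ℝ (Fin d)) :
    (((Σ i : Fin d, Fin i) → ℝ) × EuclideanSpace ℝ (Fin d)) →ₗ[ℝ]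
      (Fin n → EuclideanSpace ℝ (Fin d)) :=
  LinearMap.pi fun i =>
    (LinearMap.applyₗ (p i) ∘ₗ Matrix.toEuclideanLin.toLinearMap ∘ₗ skewOf d).coprod LinearMap.id

lemma rigidParam_apply (d n : ℕ) (p : Fin n → EuclideanSpace ℝ (Fin d))
    (c : (Σ i : Fin d, Fin i) → ℝ) (b : EuclideanSpace ℝ (Fin d)) (i : Fin n) :
    rigidParam d n p (c, b) i = Matrix.toEuclideanLin (skewOf d c) (p i) + b := rfl

lemma range_rigidParam (d n : ℕ) (p : Fin n → EuclideanSpace ℝ (Fin d)) :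
    LinearMap.range (rigidParam d n p) = rigidVelocities d n p := by
  ext q
  constructor
  · rintro ⟨⟨c, b⟩, rfl⟩
    exact ⟨_, inner_toEuclideanLin_of_skew d _ (skewOf_skew d c), b,
      rigidParam_apply d n p c b⟩
  · rintro ⟨A, hA, b, hq⟩
    obtain ⟨c, rfl⟩ := exists_skewOf_toEuclideanLin d A hA
    exact ⟨(c, b), funext fun i => (hq i).symm⟩

lemma ker_rigidParam (d n : ℕ) (p : Fin n → EuclideanSpace ℝ (Fin d))
    (hspan : affineSpan ℝ (Set.range p) = ⊤) : LinearMap.ker (rigidParam d n p) = ⊥ := by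
  rw [LinearMap.ker_eq_bot']
  rintro ⟨c, b⟩ h
  have hall : ∀ x, Matrix.toEuclideanLin (skewOf d c) x + b = 0 := by
    intro x
    have hx : x ∈ affineSpan ℝ (Set.range p) := hspan ▸ AffineSubspace.mem_top ℝ _ x
    refine affineSpan_induction (p := fun x => Matrix.toEuclideanLin (skewOf d c) x + b = 0) hx
      ?_ fun t u v w hu hv hw => ?_
    · rintro _ ⟨i, rfl⟩
      exact congrFun h i
    · have huv := sub_eq_zero.2 (add_right_cancel (hu.trans hv.symm))
      simp only [vsub_eq_sub, vadd_eq_add, map_add, map_smul, map_sub]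
      rw [huv, smul_zero, zero_add, hw]
  have hb : b = 0 := by simpa using hall 0
  have hA : Matrix.toEuclideanLin (skewOf d c) = 0 := by
    ext1 x
    simpa [hb] using hall x
  have hc : c = 0 := skewOf_injective d (by simpa using hA)
  rw [hb, hc, Prod.mk_zero_zero]

/-- There are exactly `d (d + 1) / 2` independent infinitesimal rigid motions
in `d` dimensions, when the configuration affinely spans the whole space. -/
theorem finrank_rigidVelocities
    (d n : ℕ) (p : Fin n → EuclideanSpace ℝ (Fin d))
    (hspan : affineSpan ℝ (Set.range p) = ⊤) :
    Module.finrank ℝ (rigidVelocities d n p) = d * (d + 1) / 2 := by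
  rw [← range_rigidParam, LinearMap.finrank_range_of_inj (LinearMap.ker_eq_bot.1
    (ker_rigidParam d n p hspan)), Module.finrank_prod, Module.finrank_fintype_fun_eq_card,
    finrank_euclideanSpace_fin, Fintype.card_sigma]
  simp only [Fintype.card_fin]
  rw [Fin.sum_univ_eq_sum_range (fun i => i) d, ← Finset.sum_range_succ (fun i => i) d,
    Finset.sum_range_id, Nat.add_sub_cancel, mul_comm]
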